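/- arXiv:2111.07686 — 6 statements merged into one kernel-verified Lean document; each statement's English description precedes it below -/
import Mathlib

section
/- For every real x > 0 one has log x − 1/x < ψ(x) < log x. -/
/-!
The weak form of both bounds is the log-convexity of `Γ`: the secant slope of `log Γ` over
`[x, x + 1]` equals `log x` by the functional equation, so it lies between `ψ(x)` and
`ψ(x + 1) = ψ(x) + 1/x`. Strictness follows by applying the weak bounds at `x + 1` and shifting
back with the recurrence, because `1/(x + 1) < log (x + 1) - log x < 1/x`.
-/

/-- The digamma function `ψ(x) = Γ'(x) / Γ(x)`. -/
noncomputable def digamma (x : ℝ) : ℝ := deriv Real.Gamma x / Real.Gamma x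

theorem hasDerivAt_log_Gamma {x : ℝ} (hx : 0 < x) :
    HasDerivAt (Real.log ∘ Real.Gamma) (digamma x) x := by
  have hd : DifferentiableAt ℝ Real.Gamma x :=
    Real.differentiableAt_Gamma fun m => by
      have : (0 : ℝ) ≤ m := m.cast_nonneg
      linarith
  exact hd.hasDerivAt.log (Real.Gamma_pos_of_pos hx).ne'

theorem log_Gamma_add_one {x : ℝ} (hx : 0 < x) :
    (Real.log ∘ Real.Gamma) (x + 1) = Real.log x + (Real.log ∘ Real.Gamma) x := by
  simp only [Function.comp_apply]
  rw [Real.Gamma_add_one hx.ne', Real.log_mul hx.ne' (Real.Gamma_pos_of_pos hx).ne']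

theorem digamma_add_one {x : ℝ} (hx : 0 < x) : digamma (x + 1) = digamma x + 1 / x := by
  have h1 : HasDerivAt (fun y => (Real.log ∘ Real.Gamma) (y + 1)) (digamma (x + 1)) x :=
    (hasDerivAt_log_Gamma (by linarith : 0 < x + 1)).comp_add_const x 1
  have h2 : HasDerivAt (fun y => Real.log y + (Real.log ∘ Real.Gamma) y) (x⁻¹ + digamma x) x :=
    (Real.hasDerivAt_log hx.ne').add (hasDerivAt_log_Gamma hx)
  have h3 : (fun y => (Real.log ∘ Real.Gamma) (y + 1)) =ᶠ[nhds x]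
      fun y => Real.log y + (Real.log ∘ Real.Gamma) y := by
    filter_upwards [lt_mem_nhds hx] with y hy using log_Gamma_add_one hy
  rw [h1.unique (h2.congr_of_eventuallyEq h3), one_div, add_comm]

theorem slope_log_Gamma {x : ℝ} (hx : 0 < x) :
    slope (Real.log ∘ Real.Gamma) x (x + 1) = Real.log x := by
  rw [slope_def_field, log_Gamma_add_one hx]
  simp

theorem digamma_le_log {x : ℝ} (hx : 0 < x) : digamma x ≤ Real.log x := by
  rw [← slope_log_Gamma hx]
  exact Real.convexOn_log_Gamma.le_slope_of_hasDerivAt (Set.mem_Ioi.2 hx)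
    (Set.mem_Ioi.2 (by linarith)) (by linarith) (hasDerivAt_log_Gamma hx)

theorem log_le_digamma_add_one {x : ℝ} (hx : 0 < x) : Real.log x ≤ digamma (x + 1) := by
  rw [← slope_log_Gamma hx]
  exact Real.convexOn_log_Gamma.slope_le_of_hasDerivAt (Set.mem_Ioi.2 hx)
    (Set.mem_Ioi.2 (by linarith)) (by linarith) (hasDerivAt_log_Gamma (by linarith))

/-- For every real `x > 0` one has `log x - 1/x < ψ(x) < log x`. -/
theorem digamma_bounds (x : ℝ) (hx : 0 < x) :
    Real.log x - 1 / x < digamma x ∧ digamma x < Real.log x := by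
  have hx1 : 0 < x + 1 := by linarith
  have hrec := digamma_add_one hx
  have hrec1 := digamma_add_one hx1
  have hup := digamma_le_log hx1
  have hlow := log_le_digamma_add_one hx1
  have hlog_lt : Real.log (x + 1) - Real.log x < 1 / x := by
    rw [← Real.log_div hx1.ne' hx.ne']
    have hne : (x + 1) / x ≠ 1 := by
      rw [Ne, div_eq_one_iff_eq hx.ne']
      linarith
    have h := Real.log_lt_sub_one_of_pos (div_pos hx1 hx) hne
    have he : (x + 1) / x - 1 = 1 / x := by
      field_simp
      ring
    linarith
  have hlt_log : 1 / (x + 1) < Real.log (x + 1) - Real.log x := by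
    have hne : x / (x + 1) ≠ 1 := by
      rw [Ne, div_eq_one_iff_eq hx1.ne']
      linarith
    have h := Real.log_lt_sub_one_of_pos (div_pos hx hx1) hne
    rw [Real.log_div hx.ne' hx1.ne'] at h
    have he : x / (x + 1) - 1 = -(1 / (x + 1)) := by
      field_simp
      ring
    linarith
  constructor <;> linarith
end

section
/- For every real x > 1 one has 1 + 2^{−x} < ζ(x) < 1 + 2^{−x}·(x+1)/(x−1). -/
/-! Both bounds come from splitting off the terms `1` and `2^{-x}`, leaving the tail
`∑_{m≥3} m^{-x}`. The tail is positive, which is the lower bound. Each of its terms satisfies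
`m^{-x} < ∫_{m-1}^m t^{-x} dt = ((m-1)^{1-x} - m^{1-x}) / (x-1)` (`rpow_neg_lt_sub`), and these
differences telescope to `2^{1-x} / (x-1)` (`hasSum_telescope`), which is the upper bound because
`1 + 2 / (x-1) = (x+1) / (x-1)`. -/

/-- The Riemann zeta-function for real argument `x > 1`, as the series `∑_{n≥1} n^{-x}`. -/
noncomputable def rzeta (x : ℝ) : ℝ := ∑' n : ℕ, ((n : ℝ) + 1) ^ (-x)

/-- The comparison of `(a+1)^{-x}` with the integral of `t^{-x}` over `[a, a+1]`, obtained from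
`exp u > 1 + u` and `log u ≤ u - 1` instead of by integration. -/
lemma rpow_neg_lt_sub {x a : ℝ} (hx : 1 < x) (ha : 0 < a) :
    (a + 1) ^ (-x) < a ^ (1 - x) / (x - 1) - (a + 1) ^ (1 - x) / (x - 1) := by
  have hx' : 0 < x - 1 := by linarith
  have hb : 0 < a + 1 := by linarith
  have hlog : Real.log (a / (a + 1)) ≤ a / (a + 1) - 1 :=
    Real.log_le_sub_one_of_pos (by positivity)
  have hfrac : a / (a + 1) - 1 = -(1 / (a + 1)) := by field_simp; ring
  have hratio : 1 + (x - 1) / (a + 1) < (a / (a + 1)) ^ (1 - x) := by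
    have h1 : (x - 1) / (a + 1) ≤ Real.log (a / (a + 1)) * (1 - x) := by
      have : (x - 1) / (a + 1) = (x - 1) * (1 / (a + 1)) := by ring
      rw [this]
      nlinarith
    have h2 := Real.add_one_lt_exp (x := (x - 1) / (a + 1)) (by positivity)
    rw [Real.rpow_def_of_pos (by positivity)]
    linarith [Real.exp_le_exp.mpr h1]
  have hpow : (a + 1) ^ (1 - x) = (a + 1) * (a + 1) ^ (-x) := by
    rw [sub_eq_add_neg, Real.rpow_add hb, Real.rpow_one]
  rw [Real.div_rpow ha.le hb.le, lt_div_iff₀ (by positivity)] at hratio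
  rw [← sub_div, lt_div_iff₀ hx']
  have h3 : (1 + (x - 1) / (a + 1)) * (a + 1) ^ (1 - x)
      = (a + 1) ^ (1 - x) + (a + 1) ^ (-x) * (x - 1) := by
    rw [hpow]; field_simp
  linarith

lemma hasSum_telescope {x : ℝ} (hx : 1 < x) :
    HasSum (fun n : ℕ ↦ ((n : ℝ) + 2) ^ (1 - x) / (x - 1)
      - ((n : ℝ) + 2 + 1) ^ (1 - x) / (x - 1)) ((2 : ℝ) ^ (1 - x) / (x - 1)) := by
  rw [hasSum_iff_tendsto_nat_of_nonneg]
  · have hlim : Filter.Tendsto (fun n : ℕ ↦ ((n : ℝ) + 2) ^ (1 - x) / (x - 1)) Filter.atTop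
        (nhds 0) := by
      have h := ((tendsto_rpow_neg_atTop (y := x - 1) (by linarith)).comp
        (Filter.tendsto_atTop_add_const_right _ (2 : ℝ)
          tendsto_natCast_atTop_atTop)).div_const (x - 1)
      simpa [Function.comp_def] using h
    have h := hlim.const_sub ((2 : ℝ) ^ (1 - x) / (x - 1))
    rw [sub_zero] at h
    refine h.congr fun n ↦ ?_
    have hs := Finset.sum_range_sub' (fun n : ℕ ↦ ((n : ℝ) + 2) ^ (1 - x) / (x - 1)) n
    simp only [Nat.cast_zero, zero_add] at hs
    rw [← hs]
    refine Finset.sum_congr rfl fun i _ ↦ ?_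
    push_cast
    rw [add_right_comm]
  · intro n
    have hn : (0 : ℝ) < n + 2 := by positivity
    exact (lt_trans (Real.rpow_pos_of_pos (by linarith) _) (rpow_neg_lt_sub hx hn)).le

/-- For every real `x > 1` one has `1 + 2^{-x} < ζ(x) < 1 + 2^{-x}·(x+1)/(x-1)`. -/
theorem rzeta_bounds (x : ℝ) (hx : 1 < x) :
    1 + (2 : ℝ) ^ (-x) < rzeta x ∧
      rzeta x < 1 + (2 : ℝ) ^ (-x) * ((x + 1) / (x - 1)) := by
  have hlt (n : ℕ) := rpow_neg_lt_sub (a := (n : ℝ) + 2) hx (by positivity)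
  have hpos (n : ℕ) : (0 : ℝ) < ((n : ℝ) + 2 + 1) ^ (-x) := by positivity
  have htel := hasSum_telescope hx
  have hsum : Summable fun n : ℕ ↦ ((n : ℝ) + 2 + 1) ^ (-x) :=
    htel.summable.of_nonneg_of_le (fun n ↦ (hpos n).le) fun n ↦ (hlt n).le
  have hfull : Summable fun n : ℕ ↦ ((n : ℝ) + 1) ^ (-x) := by
    rw [← summable_nat_add_iff 2]
    simpa using hsum
  have hsplit : rzeta x = 1 + (2 : ℝ) ^ (-x) + ∑' n : ℕ, ((n : ℝ) + 2 + 1) ^ (-x) := by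
    rw [rzeta, ← hfull.sum_add_tsum_nat_add 2]
    norm_num [Finset.sum_range_succ]
  have htail := hsum.tsum_pos (fun n ↦ (hpos n).le) 0 (hpos 0)
  have hupper := hsum.tsum_lt_tsum (fun n ↦ (hlt n).le) (hlt 0) htel.summable
  rw [htel.tsum_eq] at hupper
  have hval : (2 : ℝ) ^ (-x) * ((x + 1) / (x - 1))
      = (2 : ℝ) ^ (-x) + (2 : ℝ) ^ (1 - x) / (x - 1) := by
    have : x - 1 ≠ 0 := by linarith
    rw [sub_eq_add_neg 1 x, Real.rpow_add two_pos, Real.rpow_one]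
    field_simp
    ring
  rw [hsplit, hval]
  constructor <;> linarith
end

section
/- Let s > 1 be a fixed real number. For every real z ∈ (0,2) one has ζ(s,z) = Σ_{k=0}^∞ (Γ(k+s)/(k!·Γ(s)))·ζ(k+s)·(1−z)^k, where the series converges absolutely. -/
/-- The Hurwitz zeta-function `ζ(s,x) = ∑_{n≥0} (n+x)^{-s}` for real `s > 1`, `x > 0`. -/
noncomputable def hzeta (s x : ℝ) : ℝ := ∑' n : ℕ, ((n : ℝ) + x) ^ (-s)

/-- The coefficient `Γ(k + s) / (k! Γ(s))` is the generalised binomial coefficient appearing in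
the expansion of `(1 - x) ^ (-s)`. -/
lemma gamma_coeff_eq_choose {s : ℝ} (hs : 0 < s) (k : ℕ) :
    Real.Gamma ((k : ℝ) + s) / ((k.factorial : ℝ) * Real.Gamma s) =
      Ring.choose (s + k - 1) k := by
  have hG : Real.Gamma ((k : ℝ) + s) = (ascPochhammer ℝ k).eval s * Real.Gamma s := by
    induction k with
    | zero => simp
    | succ k ih =>
      rw [ascPochhammer_succ_eval, show ((k + 1 : ℕ) : ℝ) + s = (k + s) + 1 by push_cast; ring,
        Real.Gamma_add_one (by positivity), ih]
      ring
  have hc := Ring.factorial_nsmul_multichoose_eq_ascPochhammer s k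
  rw [Polynomial.ascPochhammer_smeval_eq_eval, nsmul_eq_mul] at hc
  have hm : Ring.choose (s + k - 1) k = Ring.multichoose s k := by
    rw [Ring.choose]
    congr 1
    ring
  have hΓ := (Real.Gamma_pos_of_pos hs).ne'
  rw [hG, hm, ← hc]
  field_simp

/-- The binomial series of `(n + 1 - w) ^ (-s)` in powers of `w`. -/
lemma hasSum_binomial_shift {s w : ℝ} (hs : 0 < s) (hw : |w| < 1) (n : ℕ) :
    HasSum (fun k : ℕ => Real.Gamma ((k : ℝ) + s) / ((k.factorial : ℝ) * Real.Gamma s) *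
      w ^ k * ((n : ℝ) + 1) ^ (-((k : ℝ) + s))) (((n : ℝ) + 1 - w) ^ (-s)) := by
  have hn : (0 : ℝ) < (n : ℝ) + 1 := by positivity
  have hx : |w / ((n : ℝ) + 1)| < 1 := by
    rw [abs_div, abs_of_pos hn, div_lt_one hn]
    have : (0 : ℝ) ≤ n := by positivity
    linarith
  have h := (Real.one_div_one_sub_rpow_hasFPowerSeriesOnBall_zero s).hasSum
    (y := w / ((n : ℝ) + 1)) (by
      rw [← ENNReal.ofReal_one, Metric.eball_ofReal]
      rw [Metric.mem_ball, dist_zero_right]; exact hx)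
  have h2 := h.mul_left (((n : ℝ) + 1) ^ (-s))
  convert! h2 using 1
  · funext k
    rw [gamma_coeff_eq_choose hs, neg_add, Real.rpow_add hn, Real.rpow_neg hn.le (k : ℝ),
      Real.rpow_natCast]
    simp
    field_simp
  · have h1 : 0 < 1 - w / ((n : ℝ) + 1) := by linarith [(abs_lt.mp hx).2]
    rw [zero_add, one_div, ← Real.rpow_neg h1.le, ← Real.mul_rpow hn.le h1.le]
    congr 1
    field_simp

/-- Absolute convergence of the double series. -/
lemma summable_double {s w : ℝ} (hs : 1 < s) (hw : |w| < 1) :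
    Summable (fun p : ℕ × ℕ => |Real.Gamma ((p.2 : ℝ) + s) /
      ((p.2.factorial : ℝ) * Real.Gamma s) * w ^ p.2 * ((p.1 : ℝ) + 1) ^ (-((p.2 : ℝ) + s))|) := by
  have hs0 : 0 < s := by linarith
  have habs : ∀ n k : ℕ, |Real.Gamma ((k : ℝ) + s) / ((k.factorial : ℝ) * Real.Gamma s) *
      w ^ k * ((n : ℝ) + 1) ^ (-((k : ℝ) + s))| =
      Real.Gamma ((k : ℝ) + s) / ((k.factorial : ℝ) * Real.Gamma s) *
      |w| ^ k * ((n : ℝ) + 1) ^ (-((k : ℝ) + s)) := by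
    intro n k
    have h1 : 0 < Real.Gamma ((k : ℝ) + s) := Real.Gamma_pos_of_pos (by positivity)
    have h2 : 0 < Real.Gamma s := Real.Gamma_pos_of_pos hs0
    rw [abs_mul, abs_mul, abs_pow, abs_of_pos (by positivity : 0 < Real.Gamma ((k : ℝ) + s) /
      ((k.factorial : ℝ) * Real.Gamma s)), abs_of_pos (by positivity : (0 : ℝ) <
      ((n : ℝ) + 1) ^ (-((k : ℝ) + s)))]
  have hsum := fun n => hasSum_binomial_shift hs0 ((abs_abs w).trans_lt hw) n
  refine (summable_prod_of_nonneg fun p => abs_nonneg _).mpr ⟨fun n => ?_, ?_⟩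
  · simp only [habs]
    exact (hsum n).summable
  · simp only [habs, (hsum _).tsum_eq]
    refine ((Real.summable_one_div_nat_add_rpow (1 - |w|) s).mpr hs).congr fun n => ?_
    have : 0 < (n : ℝ) + (1 - |w|) := by
      have : (0 : ℝ) ≤ n := by positivity
      linarith
    rw [abs_of_pos this, one_div, ← Real.rpow_neg this.le, add_sub_assoc]

/-- For fixed `s > 1` and every `z ∈ (0,2)`,
`ζ(s,z) = ∑_{k=0}^∞ (Γ(k+s)/(k!·Γ(s)))·ζ(k+s)·(1-z)^k`, the series converging absolutely. -/
theorem hzeta_euler_series (s : ℝ) (hs : 1 < s) (z : ℝ) (hz : z ∈ Set.Ioo (0 : ℝ) 2) :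
    Summable (fun k : ℕ =>
      |Real.Gamma ((k : ℝ) + s) / ((k.factorial : ℝ) * Real.Gamma s) *
        rzeta ((k : ℝ) + s) * (1 - z) ^ k|) ∧
      hzeta s z =
        ∑' k : ℕ,
          Real.Gamma ((k : ℝ) + s) / ((k.factorial : ℝ) * Real.Gamma s) *
            rzeta ((k : ℝ) + s) * (1 - z) ^ k := by
  have hs0 : 0 < s := by linarith
  have hw : |1 - z| < 1 := abs_lt.mpr ⟨by linarith [hz.2], by linarith [hz.1]⟩
  have hsw := summable_double hs hw
  have hcol : ∀ k : ℕ, ∑' n : ℕ, Real.Gamma ((k : ℝ) + s) / ((k.factorial : ℝ) * Real.Gamma s) *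
      (1 - z) ^ k * ((n : ℝ) + 1) ^ (-((k : ℝ) + s)) =
      Real.Gamma ((k : ℝ) + s) / ((k.factorial : ℝ) * Real.Gamma s) *
        rzeta ((k : ℝ) + s) * (1 - z) ^ k := by
    intro k
    rw [tsum_mul_left, rzeta]
    ring
  constructor
  · have h := hsw.of_abs.prod_symm.prod.abs
    simpa only [Prod.swap, hcol] using h
  · simp only [← hcol]
    rw [Summable.tsum_comm (f := fun n k : ℕ => Real.Gamma ((k : ℝ) + s) /
      ((k.factorial : ℝ) * Real.Gamma s) * (1 - z) ^ k * ((n : ℝ) + 1) ^ (-((k : ℝ) + s)))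
      hsw.of_abs, hzeta]
    refine tsum_congr fun n => ?_
    rw [(hasSum_binomial_shift hs0 hw n).tsum_eq]
    congr 1
    ring
end

section
/- Let s > 1 be a fixed real number. The power series Σ_{k=1}^∞ (Γ(k+s)/(k!·Γ(s)))·(ζ(k+s)−1)·(1−z)^k converges absolutely for every real z ∈ (−1,3), and for every real z ∈ (0,2) one has ζ(s,z) = ζ(s) − 1 + z^{−s} + Σ_{k=1}^∞ (Γ(k+s)/(k!·Γ(s)))·(ζ(k+s)−1)·(1−z)^k. -/
/-- The coefficient `Γ(k+s) / (k! Γ(s))` of `x ^ k` in the expansion of `(1 - x) ^ (-s)`. -/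
noncomputable def binCoeff (s : ℝ) (k : ℕ) : ℝ :=
  Real.Gamma ((k : ℝ) + s) / ((k.factorial : ℝ) * Real.Gamma s)

/-- The term `c k m ^ (-(k+s)) w ^ k` with `m = n + 2`, indexed by the pair `(n, k)`. -/
noncomputable def dblTerm (s w : ℝ) (p : ℕ × ℕ) : ℝ :=
  binCoeff s p.2 * ((p.1 : ℝ) + 2) ^ (-((p.2 : ℝ) + s)) * w ^ p.2

lemma binCoeff_nonneg {s : ℝ} (hs : 0 < s) (k : ℕ) : 0 ≤ binCoeff s k := by
  have h1 : 0 < Real.Gamma ((k : ℝ) + s) := Real.Gamma_pos_of_pos (by positivity)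
  have h2 := Real.Gamma_pos_of_pos hs
  unfold binCoeff
  positivity

lemma binCoeff_zero {s : ℝ} (hs : 0 < s) : binCoeff s 0 = 1 := by
  have h2 := (Real.Gamma_pos_of_pos hs).ne'
  simp [binCoeff, h2]

lemma Gamma_add_nat {s : ℝ} (hs : 0 < s) (k : ℕ) :
    Real.Gamma ((k : ℝ) + s) = (ascPochhammer ℝ k).eval s * Real.Gamma s := by
  induction k with
  | zero => simp
  | succ k ih =>
    have h : (((k + 1 : ℕ) : ℝ) + s) = ((k : ℝ) + s) + 1 := by push_cast; ring
    rw [h, Real.Gamma_add_one (by positivity), ih, ascPochhammer_succ_eval]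
    ring

lemma binCoeff_eq_choose {s : ℝ} (hs : 0 < s) (k : ℕ) :
    binCoeff s k = Ring.choose (s + k - 1) k := by
  have h2 := (Real.Gamma_pos_of_pos hs).ne'
  have h3 : (k.factorial : ℝ) ≠ 0 := by positivity
  have h := Ring.factorial_nsmul_multichoose_eq_ascPochhammer s k
  rw [Polynomial.ascPochhammer_smeval_eq_eval, nsmul_eq_mul, Ring.multichoose_eq] at h
  rw [binCoeff, Gamma_add_nat hs, ← h]
  field_simp

lemma hasSum_binCoeff {s x : ℝ} (hs : 0 < s) (hx : |x| < 1) :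
    HasSum (fun k => binCoeff s k * x ^ k) ((1 - x) ^ (-s)) := by
  have h := (Real.one_div_one_sub_rpow_hasFPowerSeriesOnBall_zero s).hasSum (y := x)
    (by simpa [enorm_eq_nnnorm, ← NNReal.coe_lt_coe] using hx)
  have h1 : 0 ≤ 1 - x := by linarith [(abs_lt.1 hx).2]
  rw [Real.rpow_neg h1]
  simpa [binCoeff_eq_choose hs, FormalMultilinearSeries.ofScalars_apply_eq, mul_comm] using h

/-- The `n`-th row of the double family sums to `(n + 2 - w) ^ (-s)`: the binomial series at
`w / (n + 2)`, rescaled. -/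
lemma hasSum_row {s w : ℝ} (hs : 0 < s) (hw : |w| < 2) (n : ℕ) :
    HasSum (fun k => dblTerm s w (n, k)) (((n : ℝ) + (2 - w)) ^ (-s)) := by
  have hm : (0 : ℝ) < (n : ℝ) + 2 := by positivity
  have hn : (0 : ℝ) ≤ n := n.cast_nonneg
  have hx : |w / ((n : ℝ) + 2)| < 1 := by
    rw [abs_div, abs_of_pos hm, div_lt_one hm]; linarith
  have h := (hasSum_binCoeff hs hx).mul_left (((n : ℝ) + 2) ^ (-s))
  have h1 : 0 ≤ 1 - w / ((n : ℝ) + 2) := by linarith [(abs_lt.1 hx).2]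
  rw [← Real.mul_rpow hm.le h1] at h
  convert! h using 1
  · funext k
    have : ((n : ℝ) + 2) ^ (-((k : ℝ) + s)) = ((n : ℝ) + 2) ^ (-s) * (((n : ℝ) + 2) ^ k)⁻¹ := by
      rw [neg_add, Real.rpow_add hm, Real.rpow_neg hm.le (k : ℝ), Real.rpow_natCast, mul_comm]
    simp only [dblTerm, this, div_pow]
    ring
  · congr 1
    field_simp
    ring

lemma abs_dblTerm {s : ℝ} (hs : 0 < s) (w : ℝ) (p : ℕ × ℕ) :
    |dblTerm s w p| = dblTerm s |w| p := by
  have h : (0 : ℝ) ≤ ((p.1 : ℝ) + 2) ^ (-((p.2 : ℝ) + s)) := by positivity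
  simp only [dblTerm, abs_mul, abs_pow, abs_of_nonneg (binCoeff_nonneg hs p.2), abs_of_nonneg h]

lemma summable_shift {s a : ℝ} (hs : 1 < s) (ha : 0 < a) :
    Summable (fun n : ℕ => ((n : ℝ) + a) ^ (-s)) := by
  refine ((Real.summable_one_div_nat_add_rpow a s).2 hs).congr fun n => ?_
  have h : 0 < (n : ℝ) + a := by positivity
  rw [abs_of_pos h, Real.rpow_neg h.le, one_div]

lemma summable_abs_dblTerm {s w : ℝ} (hs : 1 < s) (hw : |w| < 2) :
    Summable (fun p => |dblTerm s w p|) := by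
  have hs0 : 0 < s := by linarith
  have hw' : |(|w|)| < 2 := by rwa [abs_abs]
  refine (summable_prod_of_nonneg fun p => abs_nonneg _).2 ⟨fun n => ?_, ?_⟩
  · simp only [abs_dblTerm hs0]
    exact (hasSum_row hs0 hw' n).summable
  · simp only [abs_dblTerm hs0, (hasSum_row hs0 hw' _).tsum_eq]
    exact summable_shift hs (by linarith)

lemma rzeta_sub_one {x : ℝ} (hx : 1 < x) :
    rzeta x - 1 = ∑' n : ℕ, ((n : ℝ) + 2) ^ (-x) := by
  rw [rzeta, (summable_shift hx one_pos).tsum_eq_zero_add]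
  simp [add_assoc, one_add_one_eq_two]

lemma tsum_column {s : ℝ} (hs : 1 < s) (w : ℝ) (k : ℕ) :
    ∑' n : ℕ, dblTerm s w (n, k) = binCoeff s k * (rzeta ((k : ℝ) + s) - 1) * w ^ k := by
  have hk : (0 : ℝ) ≤ k := k.cast_nonneg
  rw [rzeta_sub_one (by linarith), ← tsum_mul_left, ← tsum_mul_right]
  rfl

lemma summable_abs_column {s w : ℝ} (hs : 1 < s) (hw : |w| < 2) :
    Summable (fun k : ℕ => |binCoeff s k * (rzeta ((k : ℝ) + s) - 1) * w ^ k|) := by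
  have h := (summable_abs_dblTerm hs hw).of_abs.prod_symm.prod
  simpa only [Prod.swap_prod_mk, tsum_column hs] using h.abs

/-- For fixed `s > 1`, the series `∑_{k≥1} (Γ(k+s)/(k!·Γ(s)))·(ζ(k+s)-1)·(1-z)^k` converges
absolutely for `z ∈ (-1,3)`, and for `z ∈ (0,2)` one has
`ζ(s,z) = ζ(s) - 1 + z^{-s} + ∑_{k≥1} (Γ(k+s)/(k!·Γ(s)))·(ζ(k+s)-1)·(1-z)^k`. -/
theorem hzeta_enlarged_radius (s : ℝ) (hs : 1 < s) :
    (∀ z : ℝ, z ∈ Set.Ioo (-1 : ℝ) 3 →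
      Summable (fun k : ℕ =>
        |Real.Gamma (((k : ℝ) + 1) + s) / (((k + 1).factorial : ℝ) * Real.Gamma s) *
          (rzeta (((k : ℝ) + 1) + s) - 1) * (1 - z) ^ (k + 1)|)) ∧
      ∀ z : ℝ, z ∈ Set.Ioo (0 : ℝ) 2 →
        hzeta s z =
          rzeta s - 1 + z ^ (-s) +
            ∑' k : ℕ,
              Real.Gamma (((k : ℝ) + 1) + s) / (((k + 1).factorial : ℝ) * Real.Gamma s) *
                (rzeta (((k : ℝ) + 1) + s) - 1) * (1 - z) ^ (k + 1) := by
  have hs0 : 0 < s := by linarith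
  refine ⟨fun z hz => ?_, fun z hz => ?_⟩
  · have hw : |1 - z| < 2 := abs_lt.2 ⟨by linarith [hz.2], by linarith [hz.1]⟩
    simpa [binCoeff] using (summable_nat_add_iff 1).2 (summable_abs_column hs hw)
  · have hw : |1 - z| < 2 := abs_lt.2 ⟨by linarith [hz.2], by linarith [hz.1]⟩
    have hF := (summable_abs_dblTerm hs hw).of_abs
    have hcomm : ∑' n : ℕ, ∑' k : ℕ, dblTerm s (1 - z) (n, k)
        = ∑' k : ℕ, ∑' n : ℕ, dblTerm s (1 - z) (n, k) :=
      (Summable.tsum_comm (f := fun n k => dblTerm s (1 - z) (n, k)) hF).symm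
    simp only [tsum_column hs, (hasSum_row hs0 hw _).tsum_eq] at hcomm
    rw [(summable_abs_column hs hw).of_abs.tsum_eq_zero_add] at hcomm
    have hz2 : ∀ n : ℕ, (((n + 1 : ℕ) : ℝ) + z) = (n : ℝ) + (2 - (1 - z)) := fun n => by
      push_cast; ring
    rw [hzeta, (summable_shift hs hz.1).tsum_eq_zero_add]
    simp only [hz2, hcomm, binCoeff_zero hs0]
    simp [binCoeff]
    ring
end

section
/- Let x ∈ (1/2,1) be real, let a ∈ ℕ with a ≥ 2, and set r = max( ⌈((a+1)·log 2 + |log(1−(1−x))|)/|log(1−x)|⌉ − 1 , 3 ). Then |log Γ(x) − γ(1−x) − Σ_{k=2}^{r} (ζ(k)/k)(1−x)^k| < 2^{−a−1}. -/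
open Filter Topology

/-- The sum over `m ≥ 1` of `-log (1 - y/m) - y/m` is `log Γ(1 - y) - γ y`. The index `m` is
shifted by one. -/
lemma tendsto_sum_log_remainder {y : ℝ} (hy1 : y < 1) :
    Tendsto (fun n : ℕ => ∑ m ∈ Finset.range n,
      (-Real.log (1 - y / ((m : ℝ) + 1)) - y / ((m : ℝ) + 1))) atTop
      (𝓝 (Real.log (Real.Gamma (1 - y)) - Real.eulerMascheroniConstant * y)) := by
  have h1 := Real.BohrMollerup.tendsto_log_gamma (x := 1 - y) (by linarith)
  have h2 := Real.tendsto_harmonic_sub_log.mul_const y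
  have h3 := (Real.tendsto_log_comp_add_sub_log (1 - y)).comp
    (tendsto_natCast_atTop_atTop (R := ℝ))
  have h4 := (h1.sub h2).add h3
  rw [add_zero] at h4
  refine h4.congr fun n => ?_
  have key : ∀ n : ℕ, ∑ m ∈ Finset.range n,
      (-Real.log (1 - y / ((m : ℝ) + 1)) - y / ((m : ℝ) + 1)) =
      Real.log (n.factorial : ℝ) - ∑ m ∈ Finset.range n, Real.log (1 - y + m)
        - (harmonic n : ℝ) * y := by
    intro n
    induction n with
    | zero => simp
    | succ k ih =>
      have hk : (0 : ℝ) < (k : ℝ) + 1 := by positivity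
      have hp : 0 < 1 - y + (k : ℝ) := by
        have : (0 : ℝ) ≤ k := by positivity
        linarith
      have e : 1 - y / ((k : ℝ) + 1) = (1 - y + k) / ((k : ℝ) + 1) := by
        field_simp
        ring
      have hf : ((k.factorial : ℕ) : ℝ) ≠ 0 := by positivity
      rw [Finset.sum_range_succ, ih, Finset.sum_range_succ, harmonic_succ, Nat.factorial_succ, e,
        Real.log_div hp.ne' hk.ne']
      push_cast
      rw [Real.log_mul hk.ne' hf]
      ring
  rw [key n, Real.BohrMollerup.logGammaSeq, Finset.sum_range_succ]
  simp only [Function.comp_apply]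
  rw [add_comm (n : ℝ) (1 - y)]
  ring

/-- The Taylor tail of `-log (1 - z)` beyond order `N + 1` is nonnegative and dominated by a
geometric series; the factor `1/4` comes from the denominators `k ≥ N + 2 ≥ 4`. -/
lemma log_tail_bounds {z : ℝ} (hz0 : 0 < z) (hz1 : z < 1) {N : ℕ} (hN : 2 ≤ N) :
    0 ≤ -Real.log (1 - z) - z - ∑ i ∈ Finset.range N, z ^ (i + 2) / ((i : ℝ) + 2) ∧
    -Real.log (1 - z) - z - ∑ i ∈ Finset.range N, z ^ (i + 2) / ((i : ℝ) + 2) ≤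
      z ^ (N + 2) / (4 * (1 - z)) := by
  have h := Real.hasSum_pow_div_log_of_abs_lt_one (x := z) (by rwa [abs_of_pos hz0])
  have h' := (hasSum_nat_add_iff' (N + 1)).mpr h
  have e : -Real.log (1 - z) - ∑ i ∈ Finset.range (N + 1), z ^ (i + 1) / ((i : ℝ) + 1) =
      -Real.log (1 - z) - z - ∑ i ∈ Finset.range N, z ^ (i + 2) / ((i : ℝ) + 2) := by
    rw [Finset.sum_range_succ']
    have : ∀ i : ℕ, z ^ (i + 1 + 1) / (((i + 1 : ℕ) : ℝ) + 1) = z ^ (i + 2) / ((i : ℝ) + 2) := by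
      intro i
      push_cast
      ring_nf
    simp only [this]
    simp
    ring
  rw [e] at h'
  refine ⟨h'.nonneg fun i => by positivity, ?_⟩
  have hg := (hasSum_geometric_of_lt_one hz0.le hz1).mul_left (z ^ (N + 2) / 4)
  have e2 : z ^ (N + 2) / 4 * (1 - z)⁻¹ = z ^ (N + 2) / (4 * (1 - z)) := by
    have : 1 - z ≠ 0 := by linarith
    field_simp
  rw [e2] at hg
  refine hasSum_le (fun i => ?_) h' hg
  have hN' : (2 : ℝ) ≤ N := by exact_mod_cast hN
  have hi : (0 : ℝ) ≤ i := by positivity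
  have e3 : z ^ (N + 2) / 4 * z ^ i = z ^ (i + (N + 1) + 1) / 4 := by ring
  rw [e3]
  push_cast
  gcongr
  linarith

lemma sum_int_Icc_two (f : ℤ → ℝ) (N : ℕ) :
    ∑ k ∈ Finset.Icc (2 : ℤ) ((N : ℤ) + 1), f k = ∑ i ∈ Finset.range N, f ((i : ℤ) + 2) := by
  symm
  refine Finset.sum_bij' (fun i _ => (i : ℤ) + 2) (fun k _ => (k - 2).toNat) ?_ ?_ ?_ ?_ ?_
  · intro i hi
    simp only [Finset.mem_range, Finset.mem_Icc] at *
    omega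
  · intro k hk
    simp only [Finset.mem_range, Finset.mem_Icc] at *
    omega
  · intro i hi
    simp
  · intro k hk
    simp only [Finset.mem_Icc] at hk
    omega
  · intro i hi
    rfl

/-- `∑_{m ≥ 1} (y/m)^k / k = ζ(k)/k · y^k`, for `k = i + 2`. -/
lemma hasSum_rzeta_term (y : ℝ) (i : ℕ) :
    HasSum (fun m : ℕ => (y / ((m : ℝ) + 1)) ^ (i + 2) / ((i : ℝ) + 2))
      (rzeta (((i : ℤ) + 2 : ℤ) : ℝ) / (((i : ℤ) + 2 : ℤ) : ℝ) * (1 - (1 - y)) ^ ((i : ℤ) + 2)) := by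
  have hs : Summable fun m : ℕ => ((m : ℝ) + 1) ^ (-(((i : ℤ) + 2 : ℤ) : ℝ)) := by
    have h0 : Summable fun m : ℕ => (m : ℝ) ^ (-(((i : ℤ) + 2 : ℤ) : ℝ)) := by
      rw [Real.summable_nat_rpow]
      push_cast
      have : (0 : ℝ) ≤ i := by positivity
      linarith
    have h1 := (summable_nat_add_iff 1).mpr h0
    simpa using h1
  have h := hs.hasSum.mul_right (y ^ (i + 2) / ((i : ℝ) + 2))
  have e : (∑' m : ℕ, ((m : ℝ) + 1) ^ (-(((i : ℤ) + 2 : ℤ) : ℝ))) * (y ^ (i + 2) / ((i : ℝ) + 2)) =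
      rzeta (((i : ℤ) + 2 : ℤ) : ℝ) / (((i : ℤ) + 2 : ℤ) : ℝ) * (1 - (1 - y)) ^ ((i : ℤ) + 2) := by
    have e1 : (1 - (1 - y)) ^ ((i : ℤ) + 2) = y ^ (i + 2) := by
      rw [sub_sub_cancel]
      exact_mod_cast zpow_natCast y (i + 2)
    rw [e1, rzeta]
    push_cast
    ring
  rw [e] at h
  refine (congrArg (fun f : ℕ → ℝ => HasSum f _) (funext fun m => ?_)).mpr h
  have hm : (0 : ℝ) < (m : ℝ) + 1 := by positivity
  have : ((m : ℝ) + 1) ^ (-(((i : ℤ) + 2 : ℤ) : ℝ)) = (((m : ℝ) + 1) ^ (i + 2))⁻¹ := by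
    rw [Real.rpow_neg hm.le, Real.rpow_intCast]
    congr 1
  rw [this, div_pow]
  ring

/-- Error bound for the truncation at order `N + 1`, before the choice of the order is used. -/
lemma abs_logGamma_sub_le {y : ℝ} (hy0 : 0 < y) (hy1 : y < 1) {N : ℕ} (hN : 2 ≤ N) :
    |Real.log (Real.Gamma (1 - y)) - Real.eulerMascheroniConstant * y -
      ∑ i ∈ Finset.range N, rzeta (((i : ℤ) + 2 : ℤ) : ℝ) / (((i : ℤ) + 2 : ℤ) : ℝ) *
        (1 - (1 - y)) ^ ((i : ℤ) + 2)| ≤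
      y ^ (N + 2) / (4 * (1 - y)) * (Real.pi ^ 2 / 6) := by
  have hS := (hasSum_sum (s := Finset.range N) fun i _ => hasSum_rzeta_term y i).tendsto_sum_nat
  have hD := (tendsto_sum_log_remainder hy1).sub hS
  simp only [← Finset.sum_sub_distrib] at hD
  have hz : ∀ m : ℕ, 0 < y / ((m : ℝ) + 1) ∧ y / ((m : ℝ) + 1) ≤ y := fun m =>
    ⟨by positivity, div_le_self hy0.le (by linarith [(Nat.cast_nonneg m : (0 : ℝ) ≤ m)])⟩
  have hb := fun m : ℕ => log_tail_bounds (hz m).1 ((hz m).2.trans_lt hy1) hN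
  have hζ : HasSum (fun m : ℕ => 1 / ((m : ℝ) + 1) ^ 2) (Real.pi ^ 2 / 6) := by
    have := (hasSum_nat_add_iff' 1).mpr hasSum_zeta_two
    simpa using this
  have hC := hζ.mul_left (y ^ (N + 2) / (4 * (1 - y)))
  have h1y : 0 < 1 - y := by linarith
  have hle : ∀ m : ℕ, (y / ((m : ℝ) + 1)) ^ (N + 2) / (4 * (1 - y / ((m : ℝ) + 1))) ≤
      y ^ (N + 2) / (4 * (1 - y)) * (1 / ((m : ℝ) + 1) ^ 2) := by
    intro m
    have hm : (1 : ℝ) ≤ (m : ℝ) + 1 := by linarith [(Nat.cast_nonneg m : (0 : ℝ) ≤ m)]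
    have e : y ^ (N + 2) / (4 * (1 - y)) * (1 / ((m : ℝ) + 1) ^ 2) =
        (y ^ (N + 2) / ((m : ℝ) + 1) ^ 2) / (4 * (1 - y)) := by
      field_simp
    rw [e, div_pow]
    have h2 := (hz m).2
    gcongr
    omega
  rw [abs_of_nonneg (ge_of_tendsto' hD fun n => Finset.sum_nonneg fun m _ => (hb m).1)]
  refine le_of_tendsto' hD fun n => ?_
  refine (Finset.sum_le_sum fun m _ => (hb m).2.trans (hle m)).trans ?_
  exact sum_le_hasSum _ (fun m _ => by positivity) hC

/-- Truncation estimate for Euler's series of `log Γ`: for `x ∈ (1/2,1)`, `a ≥ 2` and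
`r = max(⌈((a+1)log 2 + |log(1-(1-x))|)/|log(1-x)|⌉ - 1, 3)`, the truncated series
approximates `log Γ(x) - γ(1-x)` within `2^{-a-1}`. -/
theorem logGamma_truncated_series (x : ℝ) (hx : x ∈ Set.Ioo (1 / 2 : ℝ) 1)
    (a : ℕ) (ha : 2 ≤ a)
    (r : ℤ)
    (hr : r = max (⌈(((a : ℝ) + 1) * Real.log 2 + |Real.log (1 - (1 - x))|) /
      |Real.log (1 - x)|⌉ - 1) 3) :
    |Real.log (Real.Gamma x) - Real.eulerMascheroniConstant * (1 - x) -
        ∑ k ∈ Finset.Icc (2 : ℤ) r, rzeta (k : ℝ) / (k : ℝ) * (1 - x) ^ k| <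
      (2 : ℝ) ^ (-(a : ℝ) - 1) := by
  obtain ⟨hx0, hx1⟩ := hx
  obtain ⟨y, rfl⟩ : ∃ y, x = 1 - y := ⟨1 - x, by ring⟩
  have hy0 : 0 < y := by linarith
  have hy1 : y < 1 := by linarith
  have h1y : 0 < 1 - y := by linarith
  obtain ⟨N, hN⟩ : ∃ N : ℕ, r = (N : ℤ) + 1 := ⟨(r - 1).toNat, by omega⟩
  have hN2 : 2 ≤ N := by omega
  have hceil : ⌈(((a : ℝ) + 1) * Real.log 2 + |Real.log (1 - (1 - (1 - y)))|) /
      |Real.log (1 - (1 - y))|⌉ ≤ (N : ℤ) + 2 := by omega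
  simp only [Int.ceil_le, sub_sub_cancel] at hceil
  have hly : Real.log y < 0 := Real.log_neg hy0 hy1
  have hl1 : Real.log (1 - y) < 0 := Real.log_neg h1y (by linarith)
  rw [abs_of_neg hly, abs_of_neg hl1, div_le_iff₀ (by linarith)] at hceil
  push_cast at hceil
  have hpow : y ^ (N + 2) ≤ (2 : ℝ) ^ (-(a : ℝ) - 1) * (1 - y) := by
    rw [← Real.log_le_log_iff (by positivity) (by positivity),
      Real.log_mul (by positivity) h1y.ne', Real.log_pow, Real.log_rpow (by norm_num)]
    push_cast
    linarith
  rw [hN, sum_int_Icc_two]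
  have hmain := abs_logGamma_sub_le hy0 hy1 hN2
  have hfrac : y ^ (N + 2) / (4 * (1 - y)) ≤ (2 : ℝ) ^ (-(a : ℝ) - 1) / 4 := by
    rw [div_le_iff₀ (by linarith)]
    linarith
  have hε : (0 : ℝ) < (2 : ℝ) ^ (-(a : ℝ) - 1) := by positivity
  have hπ : Real.pi ^ 2 / 6 < 4 := by
    nlinarith [Real.pi_pos, Real.pi_le_four]
  have hlast : y ^ (N + 2) / (4 * (1 - y)) * (Real.pi ^ 2 / 6) < (2 : ℝ) ^ (-(a : ℝ) - 1) := by
    calc _ ≤ (2 : ℝ) ^ (-(a : ℝ) - 1) / 4 * (Real.pi ^ 2 / 6) := by gcongr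
      _ < (2 : ℝ) ^ (-(a : ℝ) - 1) / 4 * 4 := by gcongr
      _ = _ := by ring
  refine lt_of_le_of_lt ?_ hlast
  simpa only [sub_sub_cancel] using hmain
end

section
/- Let v > 0 be real, let u ∈ ℕ with u ≥ 2 and m ∈ ℕ with m ≥ 1. Set d = (1+(u−1)/v)^{−1}, S_m = Σ_{n=1}^m (B_{2n}/(2n(2n−1)))·(d^{2n−1}−1)/v^{2n−1} and E_m = (1/(2m))·∫_v^{u+v−1} B_{2m}({t−v})·t^{−2m} dt. Then log Γ(u+v) − log Γ(v) = u·log v − u + 1 − (u+v−1/2)·log d + S_m + E_m, and moreover |E_m| < 2·(1 + 4^{−(m+1)}·(2m+3)/(2m+1))·((2m)!/(2π)^{2m+2})·(1−d^{2m+1})/v^{2m+1}. -/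
/-!
The formula is Euler–Maclaurin summation for `log` on `[v, v + N]`, `N = u - 1`, combined with
`log Γ(v + N + 1) - log Γ(v) = ∑_{k ≤ N} log (v + k)`.

On one unit interval `[a, a + 1]`, write `e_p(a) = (1/p) ∫₀¹ B_p(x) (a + x)^{-p} dx`
(`unitRemainder`) and let `T_n(a)` be the `n`-th correction term (`unitTerm`). Integrating by parts
twice gives `e_{2m} = T_{m+1} + e_{2m+2}` (`unitRemainder_succ`), so the trapezoid formula for `log`
with remainder `e_{2m}` (`unit_trapezoid`) follows by induction from the case `m = 1`. Adding up
over `a = v + k` makes the `T_n` telescope and turns the remainders into the integral over the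
whole range.

For the bound, choosing another constant of integration gives
`e_{2m}(a) = (1/(2m+2)) ∫₀¹ (B_{2m+2}(x) - B_{2m+2}) (a + x)^{-2m-2} dx`. The cosine series of the
even Bernoulli polynomials shows that they are extremal at `0`, so `e_{2m}` has the sign
`(-1)^{m+1}`. Hence `e_{2m}` and `e_{2m+2}` have opposite signs, and
`|e_{2m}| ≤ |T_{m+1}|` (`unitRemainder_le`): the error is at most the first omitted term. That term
is a multiple of `|B_{2m+2}| = 2 (2m+2)! ζ(2m+2) / (2π)^{2m+2}`, and comparing the tail of the zeta
series with a telescoping series gives `ζ(s) < 1 + 2^{-s} (s+1)/(s-1)` (`zeta_lt`).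
-/

/-- The Bernoulli polynomial `B_n(x)`, as a real function. -/
noncomputable def bernPoly (n : ℕ) (x : ℝ) : ℝ :=
  ((Polynomial.bernoulli n).map (algebraMap ℚ ℝ)).eval x

/-! ### An upper bound for zeta at integers -/

/-- By Bernoulli's inequality, the terms of the zeta series are dominated by telescoping ones; this
is the integral comparison `n^{-s} < ∫_{n-1}^n x^{-s} dx` with `s = k + 1`, `n = i + 3`. -/
theorem zeta_tail_term (k i : ℕ) (hk : 1 ≤ k) :
    1 / ((i : ℝ) + 3) ^ (k + 1) <
      (1 / (k : ℝ)) * (1 / ((i : ℝ) + 2) ^ k - 1 / ((i : ℝ) + 3) ^ k) := by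
  have hk0 : (0 : ℝ) < k := by exact_mod_cast hk
  have hi : (0 : ℝ) ≤ i := Nat.cast_nonneg i
  have hB := one_add_mul_le_pow (a := 1 / ((i : ℝ) + 2))
    (by have : (0 : ℝ) ≤ 1 / ((i : ℝ) + 2) := by positivity
        linarith) k
  have e : 1 + 1 / ((i : ℝ) + 2) = ((i : ℝ) + 3) / (i + 2) := by field_simp; ring
  rw [e, div_pow] at hB
  have h3 : 0 < 1 / ((i : ℝ) + 3) ^ k := by positivity
  have hC := mul_le_mul_of_nonneg_right hB h3.le
  have e2 : ((i : ℝ) + 3) ^ k / (i + 2) ^ k * (1 / ((i : ℝ) + 3) ^ k) = 1 / ((i : ℝ) + 2) ^ k := by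
    field_simp
  rw [e2] at hC
  calc 1 / ((i : ℝ) + 3) ^ (k + 1) = 1 / ((i : ℝ) + 3) * (1 / ((i : ℝ) + 3) ^ k) := by
        rw [pow_succ]; field_simp
    _ < 1 / ((i : ℝ) + 2) * (1 / ((i : ℝ) + 3) ^ k) := by
        gcongr; linarith
    _ = (1 / (k : ℝ)) * ((1 + k * (1 / ((i : ℝ) + 2))) * (1 / ((i : ℝ) + 3) ^ k)
          - 1 / ((i : ℝ) + 3) ^ k) := by
        field_simp; ring
    _ ≤ _ := by gcongr

open Filter Topology in
/-- `ζ(s) < 1 + 2^{-s} (s + 1) / (s - 1)` with `s = k + 1`. -/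
theorem zeta_lt (k : ℕ) (hk : 1 ≤ k) {z : ℝ}
    (hz : HasSum (fun n : ℕ => 1 / (n : ℝ) ^ (k + 1)) z) :
    z < 1 + 1 / 2 ^ (k + 1) * (((k : ℝ) + 2) / k) := by
  have hk0 : (0 : ℝ) < k := by exact_mod_cast hk
  -- The term `n = 0` is `1 / 0 = 0`, so dropping three terms removes `1 + 2^{-s}`.
  have h1 := (hasSum_nat_add_iff' 3).2 hz
  have h2 : HasSum (fun i : ℕ => (1 / (k : ℝ)) *
      (1 / ((i : ℝ) + 2) ^ k - 1 / ((i : ℝ) + 3) ^ k)) ((1 / (k : ℝ)) * (1 / 2 ^ k - 0)) := by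
    refine HasSum.mul_left _ ?_
    rw [hasSum_iff_tendsto_nat_of_nonneg]
    · have hs : ∀ n : ℕ, ∑ i ∈ Finset.range n,
          (1 / ((i : ℝ) + 2) ^ k - 1 / ((i : ℝ) + 3) ^ k) = 1 / 2 ^ k - 1 / ((n : ℝ) + 2) ^ k := by
        intro n
        induction n with
        | zero => simp
        | succ n ih =>
          rw [Finset.sum_range_succ, ih]; push_cast
          rw [show (n : ℝ) + 1 + 2 = n + 3 by ring]; ring
      simp_rw [hs]
      refine tendsto_const_nhds.sub ?_
      have ht : Tendsto (fun n : ℕ => ((n : ℝ) + 2) ^ k) atTop atTop :=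
        (tendsto_pow_atTop (by omega)).comp
          (tendsto_atTop_add_const_right _ _ tendsto_natCast_atTop_atTop)
      simpa using! ht.inv_tendsto_atTop
    · intro i
      rw [sub_nonneg]
      have hi : (0 : ℝ) ≤ i := Nat.cast_nonneg i
      gcongr; linarith
  have h3 := hasSum_lt (i := 0) (fun i => ?_) ?_ h1 h2
  · simp only [Finset.sum_range_succ, Finset.sum_range_zero] at h3
    have e : (1 : ℝ) / 2 ^ (k + 1) * (((k : ℝ) + 2) / k) =
        1 / 2 ^ (k + 1) + (1 / (k : ℝ)) * (1 / 2 ^ k - 0) := by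
      rw [pow_succ]; field_simp; ring
    rw [e]
    norm_num at h3 ⊢
    linarith
  · have := zeta_tail_term k i hk
    push_cast
    exact this.le
  · have := zeta_tail_term k 0 hk
    simpa using this

/-! ### The remainder on a unit interval -/

/-- The Euler–Maclaurin remainder `(1/p) ∫₀¹ B_p(x) (a + x)^{-p} dx` for `log` on `[a, a + 1]`. -/
noncomputable def unitRemainder (p : ℕ) (a : ℝ) : ℝ :=
  1 / (p : ℝ) * ∫ x in (0 : ℝ)..1, bernoulliFun p x / (a + x) ^ p

theorem intervalIntegrable_kernel (p q : ℕ) (c : ℝ) {a : ℝ} (ha : 0 < a) :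
    IntervalIntegrable (fun x => (bernoulliFun p x - c) / (a + x) ^ q) MeasureTheory.volume 0 1 := by
  refine ContinuousOn.intervalIntegrable ?_
  rw [Set.uIcc_of_le zero_le_one]
  refine ContinuousOn.div (by fun_prop) (by fun_prop) ?_
  intro x hx
  have := hx.1
  positivity

theorem hasDerivAt_inv_pow (q : ℕ) {a x : ℝ} (h : 0 < a + x) :
    HasDerivAt (fun x : ℝ => 1 / (a + x) ^ q) (-(q : ℝ) / (a + x) ^ (q + 1)) x := by
  have h1 : HasDerivAt (fun x : ℝ => a + x) 1 x := (hasDerivAt_id x).const_add a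
  have h2 := (h1.pow q).inv (pow_ne_zero q h.ne')
  simp only [one_div]
  convert! h2 using 1
  rcases q with _ | q
  · simp
  · simp only [Nat.add_sub_cancel, Pi.pow_apply]
    field_simp
    ring

/-- Two integrations by parts. The constant `c` is a free constant of integration: `c = 0` yields the
next Euler–Maclaurin step, while `c = B_{p+2}` makes the boundary term vanish and leaves an
integrand of constant sign. -/
theorem unitRemainder_eq (p : ℕ) (hp : 2 ≤ p) (hodd : bernoulliFun (p + 1) 0 = 0) (c : ℝ) {a : ℝ}
    (ha : 0 < a) :
    unitRemainder p a =
      (bernoulliFun (p + 2) 0 - c) / ((p + 2) * (p + 1)) * (1 / (a + 1) ^ (p + 1) - 1 / a ^ (p + 1))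
      + 1 / ((p : ℝ) + 2) * ∫ x in (0 : ℝ)..1, (bernoulliFun (p + 2) x - c) / (a + x) ^ (p + 2) := by
  have hp0 : (0 : ℝ) < p := by exact_mod_cast (by omega : 0 < p)
  have i1 := intervalIntegrable_kernel p p 0 ha
  simp only [sub_zero] at i1
  have i2 := intervalIntegrable_kernel (p + 2) (p + 2) c ha
  have key := intervalIntegral.integral_eq_sub_of_hasDerivAt (a := (0 : ℝ)) (b := 1)
    (f := fun x => 1 / ((p : ℝ) * (p + 1)) * (bernoulliFun (p + 1) x * (1 / (a + x) ^ p)) +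
      1 / (((p : ℝ) + 1) * (p + 2)) * ((bernoulliFun (p + 2) x - c) * (1 / (a + x) ^ (p + 1))))
    (f' := fun x => 1 / (p : ℝ) * (bernoulliFun p x / (a + x) ^ p) -
      1 / ((p : ℝ) + 2) * ((bernoulliFun (p + 2) x - c) / (a + x) ^ (p + 2)))
    (fun x hx => by
      rw [Set.uIcc_of_le zero_le_one] at hx
      have hx0 : 0 < a + x := by linarith [hx.1]
      have d1 := (hasDerivAt_bernoulliFun (p + 1) x).mul (hasDerivAt_inv_pow p hx0)
      have d2 := ((hasDerivAt_bernoulliFun (p + 2) x).sub_const c).mul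
        (hasDerivAt_inv_pow (p + 1) hx0)
      convert! (d1.const_mul (1 / ((p : ℝ) * (p + 1)))).add
        (d2.const_mul (1 / (((p : ℝ) + 1) * (p + 2)))) using 1
      rw [show p + 2 - 1 = p + 1 by omega, show p + 1 - 1 = p by omega]
      push_cast
      rw [show p + 1 + 1 = p + 2 by omega, pow_succ _ (p + 1), pow_succ _ p]
      field_simp
      ring)
    ((i1.const_mul _).sub (i2.const_mul _))
  rw [intervalIntegral.integral_sub (i1.const_mul _) (i2.const_mul _),
    intervalIntegral.integral_const_mul, intervalIntegral.integral_const_mul,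
    bernoulliFun_endpoints_eq_of_ne_one (k := p + 1) (by omega),
    bernoulliFun_endpoints_eq_of_ne_one (k := p + 2) (by omega), hodd] at key
  rw [unitRemainder, sub_eq_iff_eq_add.1 key]
  simp only [add_zero]
  field_simp
  ring

theorem bernoulliFun_odd_zero (m : ℕ) (hm : 1 ≤ m) : bernoulliFun (2 * m + 1) 0 = 0 := by
  rw [bernoulliFun_eval_zero, bernoulli_eq_zero_of_odd (by simp) (by omega)]
  simp

/-- The `n`-th Euler–Maclaurin correction term for `log` on `[a, a + 1]`. -/
noncomputable def unitTerm (n : ℕ) (a : ℝ) : ℝ :=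
  (bernoulli (2 * n) : ℝ) / ((2 * (n : ℝ)) * (2 * (n : ℝ) - 1)) *
    (1 / (a + 1) ^ (2 * n - 1) - 1 / a ^ (2 * n - 1))

theorem unitRemainder_succ (m : ℕ) (hm : 1 ≤ m) {a : ℝ} (ha : 0 < a) :
    unitRemainder (2 * m) a = unitTerm (m + 1) a + unitRemainder (2 * (m + 1)) a := by
  rw [unitRemainder_eq (2 * m) (by omega) (bernoulliFun_odd_zero m hm) 0 ha, unitTerm,
    unitRemainder, bernoulliFun_eval_zero]
  rw [show 2 * (m + 1) - 1 = 2 * m + 1 by omega, show 2 * (m + 1) = 2 * m + 2 by ring]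
  push_cast
  simp only [sub_zero]
  congr 3
  ring

/-- `(-1)^k B_{2k}(x)` is minimal at `x = 0`, since by its Fourier series `(-1)^{k+1} B_{2k}(x)` is a
positive combination of cosines `cos (2πnx)`. -/
theorem bernoulliFun_sign (k : ℕ) (hk : 1 ≤ k) {x : ℝ} (hx : x ∈ Set.Icc (0 : ℝ) 1) :
    0 ≤ (-1) ^ k * (bernoulliFun (2 * k) x - bernoulli (2 * k)) := by
  have h1 := hasSum_one_div_nat_pow_mul_cos (k := k) (by omega) hx
  have h2 := hasSum_one_div_nat_pow_mul_cos (k := k) (by omega) (x := 0) (by simp)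
  have h3 := hasSum_le (fun n => ?_) h1 h2
  · change _ * bernoulliFun (2 * k) x ≤ _ * bernoulliFun (2 * k) 0 at h3
    rw [bernoulliFun_eval_zero] at h3
    have hc : 0 < (2 * Real.pi) ^ (2 * k) / 2 / ((2 * k).factorial : ℝ) := by
      have := Real.pi_pos
      positivity
    rw [← sub_nonneg] at h3
    refine nonneg_of_mul_nonneg_right (a := (2 * Real.pi) ^ (2 * k) / 2 / ((2 * k).factorial : ℝ)) ?_ hc
    refine h3.trans_eq ?_
    rw [pow_succ]
    ring
  · simp only [mul_zero, Real.cos_zero, mul_one]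
    exact mul_le_of_le_one_right (by positivity) (Real.cos_le_one _)

theorem unitRemainder_sign (m : ℕ) (hm : 1 ≤ m) {a : ℝ} (ha : 0 < a) :
    0 ≤ (-1) ^ (m + 1) * unitRemainder (2 * m) a := by
  rw [unitRemainder_eq (2 * m) (by omega) (bernoulliFun_odd_zero m hm)
    (bernoulliFun (2 * m + 2) 0) ha, sub_self, zero_div, zero_mul, zero_add, mul_left_comm,
    ← intervalIntegral.integral_const_mul]
  refine mul_nonneg (by positivity) (intervalIntegral.integral_nonneg zero_le_one fun x hx => ?_)
  rw [← mul_div_assoc, bernoulliFun_eval_zero]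
  have hx0 := hx.1
  exact div_nonneg (bernoulliFun_sign (m + 1) (by omega) hx) (by positivity)

/-- The remainder is at most the first omitted term, because the next remainder has the opposite
sign. -/
theorem unitRemainder_le (m : ℕ) (hm : 1 ≤ m) {a : ℝ} (ha : 0 < a) :
    (-1) ^ (m + 1) * unitRemainder (2 * m) a ≤ (-1) ^ (m + 1) * unitTerm (m + 1) a := by
  have h := unitRemainder_sign (m + 1) (by omega) ha
  rw [unitRemainder_succ m hm ha]
  rw [pow_succ] at h
  linarith

/-! ### Summation -/

theorem unit_trapezoid_one {a : ℝ} (ha : 0 < a) :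
    (Real.log a + Real.log (a + 1)) / 2 =
      (a + 1) * Real.log (a + 1) - a * Real.log a - 1 + unitTerm 1 a + unitRemainder 2 a := by
  have i1 := intervalIntegrable_kernel 2 2 0 ha
  simp only [sub_zero] at i1
  have key := intervalIntegral.integral_eq_sub_of_hasDerivAt (a := (0 : ℝ)) (b := 1)
    (f := fun x => -(1 / 2) * (bernoulliFun 2 x * (1 / (a + x) ^ 1)) +
      bernoulliFun 1 x * Real.log (a + x) - ((a + x) * Real.log (a + x) - (a + x)))
    (f' := fun x => 1 / 2 * (bernoulliFun 2 x / (a + x) ^ 2))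
    (fun x hx => by
      rw [Set.uIcc_of_le zero_le_one] at hx
      have hx0 : 0 < a + x := by linarith [hx.1]
      have d0 : HasDerivAt (fun x : ℝ => a + x) 1 x := (hasDerivAt_id x).const_add a
      have dl := d0.log hx0.ne'
      have d1 := (hasDerivAt_bernoulliFun 2 x).mul (hasDerivAt_inv_pow 1 hx0)
      have d2 := (hasDerivAt_bernoulliFun 1 x).mul dl
      convert! ((d1.const_mul (-(1 / 2))).add d2).sub ((d0.mul dl).sub d0) using 1
      norm_num
      field_simp
      ring)
    (i1.const_mul _)
  rw [intervalIntegral.integral_const_mul] at key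
  rw [unitRemainder, unitTerm]
  push_cast
  rw [key]
  norm_num [bernoulli_two]
  ring

/-- Euler–Maclaurin for `log` on `[a, a + 1]`, with `∫ log` evaluated in closed form. -/
theorem unit_trapezoid (m : ℕ) (hm : 1 ≤ m) {a : ℝ} (ha : 0 < a) :
    (Real.log a + Real.log (a + 1)) / 2 =
      (a + 1) * Real.log (a + 1) - a * Real.log a - 1 + ∑ n ∈ Finset.Icc 1 m, unitTerm n a
        + unitRemainder (2 * m) a := by
  induction m, hm using Nat.le_induction with
  | base => simpa using unit_trapezoid_one ha
  | succ m hm ih =>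
    rw [ih, Finset.sum_Icc_succ_top (by omega), unitRemainder_succ m hm ha]
    ring

theorem sum_unitTerm (n N : ℕ) (v : ℝ) :
    ∑ k ∈ Finset.range N, unitTerm n (v + k) =
      (bernoulli (2 * n) : ℝ) / ((2 * (n : ℝ)) * (2 * (n : ℝ) - 1)) *
        (1 / (v + N) ^ (2 * n - 1) - 1 / v ^ (2 * n - 1)) := by
  simp only [unitTerm]
  rw [← Finset.mul_sum]
  congr 1
  have := Finset.sum_range_sub (fun k : ℕ => 1 / (v + k) ^ (2 * n - 1)) N
  push_cast at this
  simpa [add_assoc] using this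

theorem logGamma_sum (m : ℕ) (hm : 1 ≤ m) {v : ℝ} (hv : 0 < v) (N : ℕ) :
    Real.log (Real.Gamma (v + N + 1)) - Real.log (Real.Gamma v) =
      (v + N) * Real.log (v + N) - v * Real.log v - N + (Real.log v + Real.log (v + N)) / 2
        + ∑ n ∈ Finset.Icc 1 m, ∑ k ∈ Finset.range N, unitTerm n (v + k)
        + ∑ k ∈ Finset.range N, unitRemainder (2 * m) (v + k) := by
  induction N with
  | zero =>
    simp [Real.Gamma_add_one hv.ne', Real.log_mul hv.ne' (Real.Gamma_pos_of_pos hv).ne']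
  | succ N ih =>
    have hN : 0 < v + N := by positivity
    have hN1 : 0 < v + N + 1 := by positivity
    have h := unit_trapezoid m hm hN
    simp only [Finset.sum_range_succ, Finset.sum_add_distrib]
    push_cast
    rw [← add_assoc, Real.Gamma_add_one hN1.ne',
      Real.log_mul hN1.ne' (Real.Gamma_pos_of_pos hN1).ne']
    linarith

theorem sum_unitRemainder (p N : ℕ) {v : ℝ} (hv : 0 < v) :
    1 / (p : ℝ) * ∫ t in v..(v + N), bernPoly p (Int.fract (t - v)) / t ^ p =
      ∑ k ∈ Finset.range N, unitRemainder p (v + k) := by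
  have hEq : ∀ k : ℕ, Set.EqOn (fun t => bernoulliFun p (t - (v + k)) / t ^ p)
      (fun t => bernPoly p (Int.fract (t - v)) / t ^ p) (Set.uIoo (v + k) (v + (k + 1 : ℕ))) := by
    intro k t ht
    rw [Set.uIoo_of_le (by push_cast; linarith)] at ht
    have h1 := ht.1
    have h2 := ht.2
    push_cast at h2
    have : Int.fract (t - v) = t - (v + k) := by
      rw [Int.fract_eq_iff]
      exact ⟨by linarith, by linarith, k, by push_cast; ring⟩
    simp only [this]
    rfl
  simp only [unitRemainder]
  rw [← Finset.mul_sum]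
  congr 1
  have hs := intervalIntegral.sum_integral_adjacent_intervals (μ := MeasureTheory.volume)
    (f := fun t => bernPoly p (Int.fract (t - v)) / t ^ p)
    (a := fun k : ℕ => v + k) (n := N) (fun k _ => ?_)
  · simp only [Nat.cast_zero, add_zero] at hs
    rw [← hs]
    refine Finset.sum_congr rfl fun k _ => ?_
    rw [← intervalIntegral.integral_congr_uIoo (hEq k)]
    have := intervalIntegral.integral_comp_add_left (a := 0) (b := 1)
      (fun t => bernoulliFun p (t - (v + k)) / t ^ p) (v + k)
    simp only [add_sub_cancel_left, add_zero] at this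
    rw [this]
    push_cast
    rw [add_assoc]
  · refine IntervalIntegrable.congr_uIoo ?_ (hEq k)
    refine ContinuousOn.intervalIntegrable ?_
    rw [Set.uIcc_of_le (by push_cast; linarith)]
    refine ContinuousOn.div (by fun_prop) (by fun_prop) ?_
    intro x hx
    have h0 : (0 : ℝ) ≤ k := Nat.cast_nonneg k
    have := hx.1
    have : 0 < x := by linarith
    positivity

/-- The left-hand side equals `|B_{2m+2}|`. -/
theorem bernoulli_abs_bound (m : ℕ) :
    (-1 : ℝ) ^ m * (bernoulli (2 * (m + 1)) : ℝ) <
      2 * (1 + 1 / 4 ^ (m + 1) * ((2 * (m : ℝ) + 3) / (2 * (m : ℝ) + 1))) *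
        (((2 * m + 2).factorial : ℝ) / (2 * Real.pi) ^ (2 * m + 2)) := by
  have h := zeta_lt (2 * m + 1) (by omega) (hasSum_zeta_nat (k := m + 1) (by omega))
  have hpi := Real.pi_pos
  rw [show 2 * (m + 1) - 1 = 2 * m + 1 by omega, show 2 * (m + 1) = 2 * m + 2 by ring,
    show 2 * m + 1 + 1 = 2 * (m + 1) by ring, pow_mul 2 2 (m + 1)] at h
  rw [show 2 * (m + 1) = 2 * m + 2 by ring]
  have hc : (0 : ℝ) < 2 * (((2 * m + 2).factorial : ℝ) / (2 * Real.pi) ^ (2 * m + 2)) := by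
    positivity
  have h2 := mul_lt_mul_of_pos_right h hc
  push_cast at h2
  refine lt_of_eq_of_lt ?_ (h2.trans_eq ?_)
  · rw [show 2 * (m + 1) = 2 * m + 2 by ring, mul_pow 2 Real.pi, pow_succ (2 : ℝ) (2 * m + 1),
      pow_succ (-1 : ℝ) (m + 1), pow_succ (-1 : ℝ) m]
    field_simp
  · norm_num
    ring

/-- Euler–Maclaurin formula for `log Γ`: with `d = (1+(u-1)/v)⁻¹`,
`S_m = ∑_{n=1}^m (B_{2n}/(2n(2n-1)))·(d^{2n-1}-1)/v^{2n-1}` and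
`E_m = (1/(2m))·∫_v^{u+v-1} B_{2m}({t-v})·t^{-2m} dt`, one has
`log Γ(u+v) - log Γ(v) = u log v - u + 1 - (u+v-1/2) log d + S_m + E_m`, with
`|E_m| < 2(1 + 4^{-(m+1)}(2m+3)/(2m+1))·((2m)!/(2π)^{2m+2})·(1-d^{2m+1})/v^{2m+1}`. -/
theorem logGamma_eulerMaclaurin (v : ℝ) (hv : 0 < v) (u m : ℕ) (hu : 2 ≤ u) (hm : 1 ≤ m)
    (d S E : ℝ)
    (hd : d = (1 + ((u : ℝ) - 1) / v)⁻¹)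
    (hS : S = ∑ n ∈ Finset.Icc 1 m,
      ((bernoulli (2 * n) : ℝ) / ((2 * (n : ℝ)) * (2 * (n : ℝ) - 1))) *
        ((d ^ (2 * n - 1) - 1) / v ^ (2 * n - 1)))
    (hE : E = (1 / (2 * (m : ℝ))) *
      ∫ t in v..((u : ℝ) + v - 1), bernPoly (2 * m) (Int.fract (t - v)) / t ^ (2 * m)) :
    Real.log (Real.Gamma ((u : ℝ) + v)) - Real.log (Real.Gamma v) =
        (u : ℝ) * Real.log v - (u : ℝ) + 1 - ((u : ℝ) + v - 1 / 2) * Real.log d + S + E ∧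
      |E| < 2 * (1 + 1 / 4 ^ (m + 1) * ((2 * (m : ℝ) + 3) / (2 * (m : ℝ) + 1))) *
        (((2 * m).factorial : ℝ) / (2 * Real.pi) ^ (2 * m + 2)) *
          ((1 - d ^ (2 * m + 1)) / v ^ (2 * m + 1)) := by
  obtain ⟨N, rfl⟩ : ∃ N, u = N + 1 := ⟨u - 1, by omega⟩
  have hN0 : (0 : ℝ) < N := by exact_mod_cast (by omega : 0 < N)
  have hvN : 0 < v + N := by positivity
  have hd' : d = v / (v + N) := by
    rw [hd]; push_cast; rw [add_sub_cancel_right]; field_simp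
  have hd0 : 0 < d := by rw [hd']; positivity
  have hd1 : d < 1 := by rw [hd', div_lt_one hvN]; linarith
  have hlogd : Real.log d = Real.log v - Real.log (v + N) := by
    rw [hd', Real.log_div hv.ne' hvN.ne']
  have hpow : ∀ q : ℕ, 1 / (v + N) ^ q - 1 / v ^ q = (d ^ q - 1) / v ^ q := by
    intro q
    rw [hd', div_pow]
    field_simp
  have hE' : E = ∑ k ∈ Finset.range N, unitRemainder (2 * m) (v + k) := by
    rw [hE, ← sum_unitRemainder (2 * m) N hv]
    push_cast
    rw [show (N : ℝ) + 1 + v - 1 = v + N by ring]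
  have hS' : S = ∑ n ∈ Finset.Icc 1 m, ∑ k ∈ Finset.range N, unitTerm n (v + k) := by
    rw [hS]
    refine Finset.sum_congr rfl fun n _ => ?_
    rw [sum_unitTerm, hpow]
  constructor
  · have h := logGamma_sum m hm hv N
    rw [← hS', ← hE'] at h
    push_cast
    rw [show (N : ℝ) + 1 + v = v + N + 1 by ring, h, hlogd]
    ring
  · have hsgn : 0 ≤ (-1) ^ (m + 1) * E := by
      rw [hE', Finset.mul_sum]
      exact Finset.sum_nonneg fun k _ => unitRemainder_sign m hm (by positivity)
    have hle : (-1) ^ (m + 1) * E ≤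
        (-1) ^ (m + 1) * ∑ k ∈ Finset.range N, unitTerm (m + 1) (v + k) := by
      rw [hE', Finset.mul_sum, Finset.mul_sum]
      exact Finset.sum_le_sum fun k _ => unitRemainder_le m hm (by positivity)
    have habs : |E| = (-1) ^ (m + 1) * E := by
      rw [← abs_of_nonneg hsgn, abs_mul, abs_pow, abs_neg, abs_one, one_pow, one_mul]
    rw [habs]
    refine hle.trans_lt ?_
    rw [sum_unitTerm, hpow, show 2 * (m + 1) - 1 = 2 * m + 1 by omega]
    have hq : 0 < (1 - d ^ (2 * m + 1)) / v ^ (2 * m + 1) :=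
      div_pos (sub_pos.2 (pow_lt_one₀ hd0.le hd1 (by omega))) (by positivity)
    have hc : 0 < 1 / ((2 * (m : ℝ) + 2) * (2 * m + 1)) *
        ((1 - d ^ (2 * m + 1)) / v ^ (2 * m + 1)) := mul_pos (by positivity) hq
    refine lt_of_eq_of_lt ?_
      ((mul_lt_mul_of_pos_right (bernoulli_abs_bound m) hc).trans_eq ?_)
    · push_cast
      rw [pow_succ (-1 : ℝ) m, show 2 * ((m : ℝ) + 1) = 2 * m + 2 by ring,
        show 2 * (m : ℝ) + 2 - 1 = 2 * m + 1 by ring]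
      ring
    · rw [Nat.factorial_succ, Nat.factorial_succ]
      have hpi := Real.pi_pos
      push_cast
      field_simp
      ring
end
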